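/- Suppose Υ_k is positive definite for every k ∈ {0,…,N}, and define L_k = x_k'P_k x_k + 2 x_k'f_k along any trajectory of the system. Then for every k ∈ {0,…,N}, L_k − L_{k+1} = (x_k − r)'Q(x_k − r) + (B u_k + E d_k)'R(B u_k + E d_k) − r'Q r − d_k'E'R E d_k − (u_k + Υ_k^{-1}M_k x_k + Υ_k^{-1}h_k)'Υ_k (u_k + Υ_k^{-1}M_k x_k + Υ_k^{-1}h_k) + h_k'Υ_k^{-1}h_k − d_k'E'P_{k+1}E d_k − d_k'E'f_{k+1} − f_{k+1}'E d_k. -/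

import Mathlib

open Matrix Finset

/-!
Write `V P f x = x' P x + 2 x' f`. For symmetric `P`, completing the square says
`V P (P w + f) y = V P f (y + w) - V P f w`. Three applications split the value at time `k`, whose
Riccati data are sums of congruences, into a shifted stage cost, the increment of the next value
from `E d` to `A x + E d`, and an increment of the form `Υ⁻¹`. Two more, for the forms `P` and `R`
pulled back along `B`, show that the control `u` moves the next value and the input cost away from
`u = 0` by `V Υ (M x + h) u`; a last one turns this into the square in the theorem.
-/

section SymmetricForms

variable {𝕜 ι κ : Type*} [CommSemiring 𝕜] [Fintype ι]

theorem dotProduct_mulVec_comm_of_isSymm {P : Matrix ι ι 𝕜} (hP : P.IsSymm) (v w : ι → 𝕜) :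
    v ⬝ᵥ (P *ᵥ w) = w ⬝ᵥ (P *ᵥ v) := by
  rw [dotProduct_mulVec, ← mulVec_transpose, hP.eq, dotProduct_comm]

theorem isSymm_transpose_mul_mul_same {P : Matrix ι ι 𝕜} (hP : P.IsSymm) (C : Matrix ι κ 𝕜) :
    (Cᵀ * P * C).IsSymm := by
  simp only [Matrix.IsSymm, transpose_mul, transpose_transpose, hP.eq, Matrix.mul_assoc]

end SymmetricForms

section QuadraticValue

variable {𝕜 ι κ : Type*} [CommSemiring 𝕜] [Fintype ι] [Fintype κ]

/-- The value function `x' P x + 2 x' f` of an affine-quadratic problem; `P` is the Riccati matrix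
and `f` the vector that tracks the reference and the disturbance. -/
def quadraticValue (P : Matrix ι ι 𝕜) (f x : ι → 𝕜) : 𝕜 :=
  x ⬝ᵥ (P *ᵥ x) + 2 * (x ⬝ᵥ f)

theorem quadraticValue_zero (P : Matrix ι ι 𝕜) (x : ι → 𝕜) :
    quadraticValue P 0 x = x ⬝ᵥ (P *ᵥ x) := by
  simp [quadraticValue]

theorem quadraticValue_add (P₁ P₂ : Matrix ι ι 𝕜) (f₁ f₂ x : ι → 𝕜) :
    quadraticValue (P₁ + P₂) (f₁ + f₂) x = quadraticValue P₁ f₁ x + quadraticValue P₂ f₂ x := by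
  simp only [quadraticValue, add_mulVec, dotProduct_add]
  ring

theorem quadraticValue_transpose_mul_mul (P : Matrix ι ι 𝕜) (C : Matrix ι κ 𝕜) (g : ι → 𝕜)
    (x : κ → 𝕜) : quadraticValue (Cᵀ * P * C) (Cᵀ *ᵥ g) x = quadraticValue P g (C *ᵥ x) := by
  simp only [quadraticValue, ← mulVec_mulVec, dotProduct_mulVec x Cᵀ, vecMul_transpose]

end QuadraticValue

section CompletingTheSquare

variable {𝕜 ι : Type*} [CommRing 𝕜] [Fintype ι]

theorem quadraticValue_sub (P₁ P₂ : Matrix ι ι 𝕜) (f₁ f₂ x : ι → 𝕜) :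
    quadraticValue (P₁ - P₂) (f₁ - f₂) x = quadraticValue P₁ f₁ x - quadraticValue P₂ f₂ x := by
  simp only [quadraticValue, sub_mulVec, dotProduct_sub]
  ring

theorem quadraticValue_mulVec_add {P : Matrix ι ι 𝕜} (hP : P.IsSymm) (f w y : ι → 𝕜) :
    quadraticValue P (P *ᵥ w + f) y = quadraticValue P f (y + w) - quadraticValue P f w := by
  simp only [quadraticValue, mulVec_add, dotProduct_add, add_dotProduct]
  rw [dotProduct_mulVec_comm_of_isSymm hP w y]
  ring

theorem quadraticValue_mulVec {P : Matrix ι ι 𝕜} (hP : P.IsSymm) (w y : ι → 𝕜) :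
    quadraticValue P (P *ᵥ w) y = (y + w) ⬝ᵥ (P *ᵥ (y + w)) - w ⬝ᵥ (P *ᵥ w) := by
  simpa only [add_zero, quadraticValue_zero] using quadraticValue_mulVec_add hP 0 w y

theorem quadraticValue_eq_sub_dotProduct_inv [DecidableEq ι] {P : Matrix ι ι 𝕜} (hP : P.IsSymm)
    (hP_unit : IsUnit P) (g y : ι → 𝕜) :
    quadraticValue P g y =
      (y + P⁻¹ *ᵥ g) ⬝ᵥ (P *ᵥ (y + P⁻¹ *ᵥ g)) - g ⬝ᵥ (P⁻¹ *ᵥ g) := by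
  have h_cancel : P *ᵥ (P⁻¹ *ᵥ g) = g := by
    rw [mulVec_mulVec, mul_nonsing_inv _ ((isUnit_iff_isUnit_det P).1 hP_unit), one_mulVec]
  have h_square := quadraticValue_mulVec hP (P⁻¹ *ᵥ g) y
  rwa [h_cancel, dotProduct_comm (P⁻¹ *ᵥ g) g] at h_square

end CompletingTheSquare

section Riccati

variable {𝕜 ι κ μ : Type*} [CommRing 𝕜] [Fintype ι] [Fintype κ] [Fintype μ]

theorem isSymm_of_riccati_recursion [DecidableEq κ] {N : ℕ} {A Q R P : ℕ → Matrix ι ι 𝕜}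
    {B : ℕ → Matrix ι κ 𝕜} {Υ : ℕ → Matrix κ κ 𝕜} {M : ℕ → Matrix κ ι 𝕜}
    (hQ : ∀ k ≤ N, (Q k).IsSymm) (hR : ∀ k ≤ N, (R k).IsSymm) (hPterm : (P (N + 1)).IsSymm)
    (hΥ : ∀ k ≤ N, Υ k = (B k)ᵀ * (R k + P (k + 1)) * B k)
    (hP : ∀ k ≤ N, P k = Q k + (A k)ᵀ * P (k + 1) * A k - (M k)ᵀ * (Υ k)⁻¹ * M k)
    {k : ℕ} (hk : k ≤ N + 1) : (P k).IsSymm := by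
  induction hk using Nat.decreasingInduction with
  | self => exact hPterm
  | of_succ k hk ih =>
    have hkN : k ≤ N := Nat.lt_succ_iff.1 hk
    have hΥ_symm : (Υ k).IsSymm :=
      hΥ k hkN ▸ isSymm_transpose_mul_mul_same ((hR k hkN).add ih) (B k)
    rw [hP k hkN]
    exact ((hQ k hkN).add (isSymm_transpose_mul_mul_same ih (A k))).sub
      (isSymm_transpose_mul_mul_same hΥ_symm.inv (M k))

theorem quadraticValue_riccati_step {A Q P : Matrix ι ι 𝕜} {S : Matrix κ κ 𝕜}
    (hQ : Q.IsSymm) (hP : P.IsSymm) (hS : S.IsSymm) (M : Matrix κ ι 𝕜)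
    (r f w x : ι → 𝕜) (h : κ → 𝕜) :
    quadraticValue (Q + Aᵀ * P * A - Mᵀ * S * M)
        (Aᵀ *ᵥ (P *ᵥ w + f) - Mᵀ *ᵥ (S *ᵥ h) - Q *ᵥ r) x =
      (x - r) ⬝ᵥ (Q *ᵥ (x - r)) - r ⬝ᵥ (Q *ᵥ r)
        + (quadraticValue P f (A *ᵥ x + w) - quadraticValue P f w)
        - ((M *ᵥ x + h) ⬝ᵥ (S *ᵥ (M *ᵥ x + h)) - h ⬝ᵥ (S *ᵥ h)) := by
  have h_linear : Aᵀ *ᵥ (P *ᵥ w + f) - Mᵀ *ᵥ (S *ᵥ h) - Q *ᵥ r =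
      Q *ᵥ (-r) + Aᵀ *ᵥ (P *ᵥ w + f) - Mᵀ *ᵥ (S *ᵥ h) := by
    rw [mulVec_neg]
    abel
  rw [h_linear, quadraticValue_sub, quadraticValue_add, quadraticValue_transpose_mul_mul,
    quadraticValue_transpose_mul_mul, quadraticValue_mulVec hQ, quadraticValue_mulVec hS,
    quadraticValue_mulVec_add hP]
  simp only [← sub_eq_add_neg, mulVec_neg, neg_dotProduct_neg]

theorem quadraticValue_add_input_cost {P R : Matrix ι ι 𝕜} (hP : P.IsSymm) (hR : R.IsSymm)
    (B : Matrix ι κ 𝕜) (f y w : ι → 𝕜) (u : κ → 𝕜) :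
    quadraticValue P f (y + B *ᵥ u + w) + (B *ᵥ u + w) ⬝ᵥ (R *ᵥ (B *ᵥ u + w)) =
      quadraticValue P f (y + w) + w ⬝ᵥ (R *ᵥ w) +
        quadraticValue (Bᵀ * (R + P) * B) (Bᵀ *ᵥ (R *ᵥ w + (P *ᵥ (y + w) + f))) u := by
  rw [quadraticValue_transpose_mul_mul, quadraticValue_add, quadraticValue_mulVec hR,
    quadraticValue_mulVec_add hP, show B *ᵥ u + (y + w) = y + B *ᵥ u + w by abel]
  ring

theorem lyapunov_difference_step [DecidableEq κ] {A Q R P : Matrix ι ι 𝕜} {B : Matrix ι κ 𝕜}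
    {E : Matrix ι μ 𝕜} {Υ : Matrix κ κ 𝕜} {M : Matrix κ ι 𝕜} {f : ι → 𝕜} {d : μ → 𝕜} {h : κ → 𝕜}
    (hQ : Q.IsSymm) (hR : R.IsSymm) (hP : P.IsSymm)
    (hΥ : Υ = Bᵀ * (R + P) * B) (hΥ_unit : IsUnit Υ) (hM : M = Bᵀ * P * A)
    (hh : h = (Bᵀ * (R + P) * E) *ᵥ d + Bᵀ *ᵥ f) (r x : ι → 𝕜) (u : κ → 𝕜) :
    quadraticValue (Q + Aᵀ * P * A - Mᵀ * Υ⁻¹ * M)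
        ((Aᵀ * P * E) *ᵥ d + Aᵀ *ᵥ f - Mᵀ *ᵥ (Υ⁻¹ *ᵥ h) - Q *ᵥ r) x
        - quadraticValue P f (A *ᵥ x + B *ᵥ u + E *ᵥ d) =
      (x - r) ⬝ᵥ (Q *ᵥ (x - r))
        + (B *ᵥ u + E *ᵥ d) ⬝ᵥ (R *ᵥ (B *ᵥ u + E *ᵥ d))
        - r ⬝ᵥ (Q *ᵥ r)
        - (E *ᵥ d) ⬝ᵥ (R *ᵥ (E *ᵥ d))
        - (u + Υ⁻¹ *ᵥ (M *ᵥ x) + Υ⁻¹ *ᵥ h) ⬝ᵥ (Υ *ᵥ (u + Υ⁻¹ *ᵥ (M *ᵥ x) + Υ⁻¹ *ᵥ h))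
        + h ⬝ᵥ (Υ⁻¹ *ᵥ h)
        - (E *ᵥ d) ⬝ᵥ (P *ᵥ (E *ᵥ d))
        - (E *ᵥ d) ⬝ᵥ f
        - f ⬝ᵥ (E *ᵥ d) := by
  have hΥ_symm : Υ.IsSymm := hΥ ▸ isSymm_transpose_mul_mul_same (hR.add hP) B
  have h_costate : (Aᵀ * P * E) *ᵥ d + Aᵀ *ᵥ f = Aᵀ *ᵥ (P *ᵥ (E *ᵥ d) + f) := by
    simp only [mulVec_add, mulVec_mulVec, Matrix.mul_assoc]
  have h_gradient : Bᵀ *ᵥ (R *ᵥ (E *ᵥ d) + (P *ᵥ (A *ᵥ x + E *ᵥ d) + f)) = M *ᵥ x + h := by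
    rw [hM, hh]
    simp only [mulVec_add, mulVec_mulVec, Matrix.mul_add, Matrix.add_mul, add_mulVec,
      Matrix.mul_assoc]
    abel
  have h_current := quadraticValue_riccati_step (A := A) hQ hP hΥ_symm.inv M r f (E *ᵥ d) x h
  have h_next := quadraticValue_add_input_cost hP hR B f (A *ᵥ x) (E *ᵥ d) u
  have h_square := quadraticValue_eq_sub_dotProduct_inv hΥ_symm hΥ_unit (M *ᵥ x + h) u
  have h_disturbance : quadraticValue P f (E *ᵥ d) =
      (E *ᵥ d) ⬝ᵥ (P *ᵥ (E *ᵥ d)) + (E *ᵥ d) ⬝ᵥ f + f ⬝ᵥ (E *ᵥ d) := by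
    rw [quadraticValue, dotProduct_comm f]
    ring
  rw [← hΥ, h_gradient] at h_next
  rw [mulVec_add Υ⁻¹, ← add_assoc, ← mulVec_add Υ⁻¹] at h_square
  rw [h_costate]
  linear_combination h_current - h_next - h_square - h_disturbance

theorem lyapunov_difference_identity_general [DecidableEq κ] {N : ℕ}
    {A Q R : ℕ → Matrix ι ι 𝕜} {B : ℕ → Matrix ι κ 𝕜} {E : ℕ → Matrix ι μ 𝕜} {r : ℕ → ι → 𝕜}
    (hQ : ∀ k ≤ N, (Q k).IsSymm) (hR : ∀ k ≤ N, (R k).IsSymm)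
    {P : ℕ → Matrix ι ι 𝕜} {Υ : ℕ → Matrix κ κ 𝕜} {M : ℕ → Matrix κ ι 𝕜}
    (hPterm : (P (N + 1)).IsSymm)
    (hΥ : ∀ k ≤ N, Υ k = (B k)ᵀ * (R k + P (k + 1)) * B k)
    (hM : ∀ k ≤ N, M k = (B k)ᵀ * P (k + 1) * A k)
    (hP : ∀ k ≤ N, P k = Q k + (A k)ᵀ * P (k + 1) * A k - (M k)ᵀ * (Υ k)⁻¹ * M k)
    (hΥ_unit : ∀ k ≤ N, IsUnit (Υ k))
    {d : ℕ → μ → 𝕜} {f : ℕ → ι → 𝕜} {h : ℕ → κ → 𝕜}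
    (hh : ∀ k ≤ N, h k = ((B k)ᵀ * (R k + P (k + 1)) * E k) *ᵥ d k + (B k)ᵀ *ᵥ f (k + 1))
    (hf : ∀ k ≤ N, f k = ((A k)ᵀ * P (k + 1) * E k) *ᵥ d k + (A k)ᵀ *ᵥ f (k + 1)
            - (M k)ᵀ *ᵥ ((Υ k)⁻¹ *ᵥ h k) - Q k *ᵥ r k)
    {x : ℕ → ι → 𝕜} {u : ℕ → κ → 𝕜}
    (hx : ∀ k ≤ N, x (k + 1) = A k *ᵥ x k + B k *ᵥ u k + E k *ᵥ d k) {k : ℕ} (hk : k ≤ N) :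
    quadraticValue (P k) (f k) (x k) - quadraticValue (P (k + 1)) (f (k + 1)) (x (k + 1)) =
      (x k - r k) ⬝ᵥ (Q k *ᵥ (x k - r k))
        + (B k *ᵥ u k + E k *ᵥ d k) ⬝ᵥ (R k *ᵥ (B k *ᵥ u k + E k *ᵥ d k))
        - r k ⬝ᵥ (Q k *ᵥ r k)
        - (E k *ᵥ d k) ⬝ᵥ (R k *ᵥ (E k *ᵥ d k))
        - (u k + (Υ k)⁻¹ *ᵥ (M k *ᵥ x k) + (Υ k)⁻¹ *ᵥ h k) ⬝ᵥ
            (Υ k *ᵥ (u k + (Υ k)⁻¹ *ᵥ (M k *ᵥ x k) + (Υ k)⁻¹ *ᵥ h k))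
        + h k ⬝ᵥ ((Υ k)⁻¹ *ᵥ h k)
        - (E k *ᵥ d k) ⬝ᵥ (P (k + 1) *ᵥ (E k *ᵥ d k))
        - (E k *ᵥ d k) ⬝ᵥ f (k + 1)
        - f (k + 1) ⬝ᵥ (E k *ᵥ d k) := by
  have hP_symm : (P (k + 1)).IsSymm :=
    isSymm_of_riccati_recursion hQ hR hPterm hΥ hP (Nat.succ_le_succ hk)
  rw [hP k hk, hf k hk, hx k hk]
  exact lyapunov_difference_step (hQ k hk) (hR k hk) hP_symm (hΥ k hk) (hΥ_unit k hk)
    (hM k hk) (hh k hk) (r k) (x k) (u k)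

end Riccati

/-- **One-step Lyapunov-difference identity (equation (19) of the paper).**
With `L_k = x_k' P_k x_k + 2 x_k' f_k` along a trajectory of
`x_{k+1} = A x_k + B u_k + E d_k`, the difference `L_k − L_{k+1}` equals the stated
combination of stage cost, square-completion and disturbance terms. -/
theorem lyapunov_difference_identity
    (n m N : ℕ)
    (A Q R : Matrix (Fin n) (Fin n) ℝ)
    (B E : Matrix (Fin n) (Fin m) ℝ)
    (r : Fin n → ℝ)
    (hQ : Q.PosSemidef) (hR : R.PosSemidef)
    (P : ℕ → Matrix (Fin n) (Fin n) ℝ)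
    (Υ : ℕ → Matrix (Fin m) (Fin m) ℝ)
    (M : ℕ → Matrix (Fin m) (Fin n) ℝ)
    (hPterm : (P (N + 1)).PosSemidef)
    (hΥ : ∀ k ≤ N, Υ k = Bᵀ * (R + P (k + 1)) * B)
    (hM : ∀ k ≤ N, M k = Bᵀ * P (k + 1) * A)
    (hP : ∀ k ≤ N, P k = Q + Aᵀ * P (k + 1) * A - (M k)ᵀ * (Υ k)⁻¹ * M k)
    (hΥpos : ∀ k ≤ N, (Υ k).PosDef)
    (d : ℕ → Fin m → ℝ)
    (f : ℕ → Fin n → ℝ) (h : ℕ → Fin m → ℝ)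
    (hfterm : f (N + 1) = -(P (N + 1) *ᵥ r))
    (hh : ∀ k ≤ N, h k = (Bᵀ * (R + P (k + 1)) * E) *ᵥ d k + Bᵀ *ᵥ f (k + 1))
    (hf : ∀ k ≤ N, f k = (Aᵀ * P (k + 1) * E) *ᵥ d k + Aᵀ *ᵥ f (k + 1)
            - (M k)ᵀ *ᵥ ((Υ k)⁻¹ *ᵥ h k) - Q *ᵥ r)
    (x : ℕ → Fin n → ℝ) (u : ℕ → Fin m → ℝ)
    (hx : ∀ k ≤ N, x (k + 1) = A *ᵥ x k + B *ᵥ u k + E *ᵥ d k)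
    -- `L_k = x_k' P_k x_k + 2 x_k' f_k`
    (L : ℕ → ℝ)
    (hL : ∀ k ≤ N + 1, L k = x k ⬝ᵥ (P k *ᵥ x k) + 2 * (x k ⬝ᵥ f k)) :
    ∀ k ≤ N,
      L k - L (k + 1)
        = (x k - r) ⬝ᵥ (Q *ᵥ (x k - r))
          + (B *ᵥ u k + E *ᵥ d k) ⬝ᵥ (R *ᵥ (B *ᵥ u k + E *ᵥ d k))
          - r ⬝ᵥ (Q *ᵥ r)
          - (E *ᵥ d k) ⬝ᵥ (R *ᵥ (E *ᵥ d k))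
          - (u k + (Υ k)⁻¹ *ᵥ (M k *ᵥ x k) + (Υ k)⁻¹ *ᵥ h k) ⬝ᵥ
              (Υ k *ᵥ (u k + (Υ k)⁻¹ *ᵥ (M k *ᵥ x k) + (Υ k)⁻¹ *ᵥ h k))
          + h k ⬝ᵥ ((Υ k)⁻¹ *ᵥ h k)
          - (E *ᵥ d k) ⬝ᵥ (P (k + 1) *ᵥ (E *ᵥ d k))
          - (E *ᵥ d k) ⬝ᵥ f (k + 1)
          - f (k + 1) ⬝ᵥ (E *ᵥ d k) := by
  intro k hk
  rw [hL k (Nat.le_succ_of_le hk), hL (k + 1) (Nat.succ_le_succ hk)]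
  exact lyapunov_difference_identity_general (fun _ _ => isHermitian_iff_isSymm.1 hQ.isHermitian)
    (fun _ _ => isHermitian_iff_isSymm.1 hR.isHermitian)
    (isHermitian_iff_isSymm.1 hPterm.isHermitian) hΥ hM hP
    (fun j hj => (hΥpos j hj).isUnit) hh hf hx hk
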